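/- For every n ≥ 2 and every k with 1 ≤ k ≤ min(n, ⌈n/2⌉ + 1), Fishburn's alternating domain F_n on {1,…,n} is exactly (k, 2^{k-1})-abundant: its restriction to every k-element subset of {1,…,n} contains at least 2^{k-1} distinct linear orders, and some k-element subset has restriction containing exactly 2^{k-1} distinct orders. -/

import Mathlib

/-- `r` is a strict total order on `X`, supported on `X` (i.e. `r` never relates
elements outside `X`). -/
def IsLinearOrderOn {α : Type*} (X : Set α) (r : α → α → Prop) : Prop :=
  (∀ a b, r a b → a ∈ X ∧ b ∈ X) ∧
  (∀ a ∈ X, ¬ r a a) ∧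
  (∀ a ∈ X, ∀ b ∈ X, ∀ c ∈ X, r a b → r b c → r a c) ∧
  (∀ a ∈ X, ∀ b ∈ X, a ≠ b → r a b ∨ r b a)

/-- A domain on `X` is a set of linear orders on `X`. -/
def IsDomainOn {α : Type*} (X : Set α) (D : Set (α → α → Prop)) : Prop :=
  ∀ r ∈ D, IsLinearOrderOn X r

/-- The restriction of the order `r` to the subset `A`. -/
def restrictRel {α : Type*} (A : Set α) (r : α → α → Prop) : α → α → Prop :=
  fun a b => a ∈ A ∧ b ∈ A ∧ r a b

/-- The restriction of the domain `D` to the subset `A`: the set of linear orders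
on `A` induced by the orders in `D`. -/
def restrictDom {α : Type*} (A : Set α) (D : Set (α → α → Prop)) :
    Set (α → α → Prop) :=
  restrictRel A '' D

/-- `D` is `(k,s)`-abundant on `X`: its restriction to every `k`-element subset of `X`
contains at least `s` distinct linear orders. -/
def IsAbundant {α : Type*} (X : Set α) (D : Set (α → α → Prop)) (k s : ℕ) : Prop :=
  ∀ A : Set α, A ⊆ X → A.ncard = k → s ≤ (restrictDom A D).ncard

/-- `D` is exactly `(k,s)`-abundant: `(k,s)`-abundant but not `(k,s+1)`-abundant. -/
def IsExactlyAbundant {α : Type*} (X : Set α) (D : Set (α → α → Prop)) (k s : ℕ) : Prop :=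
  IsAbundant X D k s ∧ ¬ IsAbundant X D k (s + 1)

/-- Fishburn's alternating domain on `{1,…,n}`: all linear orders `r` on `{1,…,n}`
such that for every triple `a < b < c`, if `b` is odd then `r` does not rank `b`
first among `{a,b,c}`, and if `b` is even then `r` does not rank `b` last among
`{a,b,c}`. -/
def fishburnAlternating (n : ℕ) : Set (ℕ → ℕ → Prop) :=
  { r | IsLinearOrderOn (Set.Icc 1 n) r ∧
      ∀ a b c : ℕ, a ∈ Set.Icc 1 n → b ∈ Set.Icc 1 n → c ∈ Set.Icc 1 n →
        a < b → b < c →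
          (Odd b → ¬ (r b a ∧ r b c)) ∧ (Even b → ¬ (r a b ∧ r c b)) }

/-- general two-coloured domain -/
def DomC (col : ℕ → Prop) (B : Finset ℕ) : Set (ℕ → ℕ → Prop) :=
  { r | IsLinearOrderOn (B : Set ℕ) r ∧
      ∀ a b c : ℕ, a ∈ B → b ∈ B → c ∈ B → a < b → b < c →
          (¬ col b → ¬ (r b a ∧ r b c)) ∧ (col b → ¬ (r a b ∧ r c b)) }

theorem lin_finite (B : Finset ℕ) :
    {r : ℕ → ℕ → Prop | IsLinearOrderOn (B : Set ℕ) r}.Finite := by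
  classical
  apply Set.Finite.subset (Set.Finite.image
    (fun s : Finset (ℕ × ℕ) => fun a b : ℕ => (a, b) ∈ s) (B ×ˢ B).powerset.finite_toSet)
  intro r hr
  refine ⟨(B ×ˢ B).filter (fun p => r p.1 p.2), ?_, ?_⟩
  · simp only [Finset.coe_powerset, Set.mem_preimage, Set.mem_powerset_iff, Finset.coe_subset]
    exact Finset.filter_subset _ _
  · funext a b
    have := hr.1 a b
    simp only [Finset.mem_coe] at this
    simp
    tauto

theorem domC_finite (col : ℕ → Prop) (B : Finset ℕ) : (DomC col B).Finite :=
  (lin_finite B).subset (fun _ h => h.1)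

theorem lin_flip {B : Finset ℕ} {r : ℕ → ℕ → Prop} (h : IsLinearOrderOn (B : Set ℕ) r) :
    IsLinearOrderOn (B : Set ℕ) (flip r) := by
  obtain ⟨h1, h2, h3, h4⟩ := h
  refine ⟨fun a b h => (h1 b a h).symm, h2, ?_, ?_⟩
  · intro a ha b hb c hc hab hbc
    exact h3 c hc b hb a ha hbc hab
  · intro a ha b hb hne
    exact (h4 a ha b hb hne).symm

theorem domC_flip {col : ℕ → Prop} {B : Finset ℕ} {r : ℕ → ℕ → Prop} (h : r ∈ DomC col B) :
    flip r ∈ DomC (fun x => ¬ col x) B := by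
  refine ⟨lin_flip h.1, ?_⟩
  intro a b c ha hb hc hab hbc
  have := h.2 a b c ha hb hc hab hbc
  simp only [flip]
  tauto

theorem domC_congr {col col' : ℕ → Prop} {B : Finset ℕ}
    (h : ∀ a ∈ B, ∀ b ∈ B, ∀ c ∈ B, a < b → b < c → (col b ↔ col' b)) :
    DomC col B = DomC col' B := by
  ext r
  constructor
  · rintro ⟨h1, h2⟩
    refine ⟨h1, fun a b c ha hb hc hab hbc => ?_⟩
    rw [← h a ha b hb c hc hab hbc]
    exact h2 a b c ha hb hc hab hbc
  · rintro ⟨h1, h2⟩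
    refine ⟨h1, fun a b c ha hb hc hab hbc => ?_⟩
    rw [h a ha b hb c hc hab hbc]
    exact h2 a b c ha hb hc hab hbc

theorem flip_inj : Function.Injective (fun r : ℕ → ℕ → Prop => flip r) := by
  intro r s h
  funext a b
  exact congrFun (congrFun h b) a

theorem domC_flip_ncard (col : ℕ → Prop) (B : Finset ℕ) :
    (DomC (fun x => ¬ col x) B).ncard = (DomC col B).ncard := by
  rw [← Set.ncard_image_of_injective (DomC col B) flip_inj]
  congr 1
  ext r
  constructor
  · intro h
    refine ⟨flip r, ?_, rfl⟩
    have := domC_flip h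
    simpa using this
  · rintro ⟨s, hs, rfl⟩
    exact domC_flip hs

/-- put `x` at the bottom -/
def addBot (B : Finset ℕ) (x : ℕ) (r : ℕ → ℕ → Prop) : ℕ → ℕ → Prop :=
  fun a b => r a b ∨ (a ∈ B ∧ a ≠ x ∧ b = x)

theorem addBot_ncard (B : Finset ℕ) (x : ℕ) (hx : x ∈ B)
    (hext : (∀ y ∈ B, x ≤ y) ∨ (∀ y ∈ B, y ≤ x)) :
    {r | r ∈ DomC (fun _ => True) B ∧ ∀ y ∈ B, y ≠ x → r y x}.ncard =
      (DomC (fun _ => True) (B.erase x)).ncard := by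
  symm
  apply Set.ncard_congr (fun r _ => addBot B x r)
  · rintro r ⟨⟨h1, h2, h3, h4⟩, h5⟩
    simp only [Finset.coe_erase, Set.mem_sdiff, Finset.mem_coe, Set.mem_singleton_iff,
      Finset.mem_erase] at h1 h2 h3 h4 h5
    refine ⟨⟨⟨?_, ?_, ?_, ?_⟩, ?_⟩, ?_⟩
    · intro a b h
      simp only [addBot, Finset.mem_coe] at *
      grind
    · intro a ha h
      simp only [addBot, Finset.mem_coe] at *
      grind
    · intro a ha b hb c hc h h'
      simp only [addBot, Finset.mem_coe] at *
      grind
    · intro a ha b hb h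
      simp only [addBot, Finset.mem_coe] at *
      grind
    · intro a b c ha hb hc hab hbc
      simp only [addBot, Finset.mem_coe] at *
      have := h5 a b c
      rcases hext with h | h
      · have := h a ha
        grind
      · have := h c hc
        grind
    · intro y hy hne
      exact Or.inr ⟨hy, hne, rfl⟩
  · intro r s hr hs h
    have h1 := hr.1.1
    have h2 := hs.1.1
    simp only [Finset.coe_erase, Set.mem_sdiff, Finset.mem_coe, Set.mem_singleton_iff] at h1 h2
    funext a b
    have h3 := congrFun (congrFun h a) b
    have := h1 a b
    have := h2 a b
    simp only [addBot, eq_iff_iff] at h3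
    apply propext
    by_cases hb : b = x
    · tauto
    · tauto
  · rintro r ⟨⟨⟨h1, h2, h3, h4⟩, h5⟩, h6⟩
    refine ⟨restrictRel (B.erase x) r, ⟨⟨?_, ?_, ?_, ?_⟩, ?_⟩, ?_⟩
    · intro a b h
      exact ⟨h.1, h.2.1⟩
    · intro a ha h
      simp at ha
      exact h2 a ha.1 h.2.2
    · intro a ha b hb c hc h h'
      refine ⟨ha, hc, ?_⟩
      simp at ha hb hc
      exact h3 a ha.1 b hb.1 c hc.1 h.2.2 h'.2.2
    · intro a ha b hb h
      have ha' := ha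
      have hb' := hb
      simp at ha' hb'
      exact (h4 a ha'.1 b hb'.1 h).imp (fun h => ⟨ha, hb, h⟩) (fun h => ⟨hb, ha, h⟩)
    · intro a b c ha hb hc hab hbc
      have := h5 a b c (Finset.mem_of_mem_erase ha) (Finset.mem_of_mem_erase hb)
        (Finset.mem_of_mem_erase hc) hab hbc
      simp only [restrictRel]
      tauto
    · funext a b
      simp only [addBot, restrictRel, Finset.coe_erase, Set.mem_sdiff, Finset.mem_coe,
        Set.mem_singleton_iff, eq_iff_iff] at *
      have := h1 a b
      have := h6 a
      have := h6 b
      have := h2 x hx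
      have := h3 x hx b
      grind

theorem single_peaked_ncard (s : ℕ) : ∀ B : Finset ℕ, B.card = s + 1 →
    (DomC (fun _ => True) B).ncard = 2 ^ s := by
  induction s with
  | zero =>
    intro B hB
    obtain ⟨x, rfl⟩ := Finset.card_eq_one.1 hB
    rw [pow_zero, Set.ncard_eq_one]
    refine ⟨fun _ _ => False, ?_⟩
    ext r
    simp only [Set.mem_singleton_iff]
    constructor
    · rintro ⟨⟨h1, h2, h3, h4⟩, h5⟩
      funext a b
      simp only [Finset.coe_singleton, Set.mem_singleton_iff] at *
      have := h1 a b
      have := h2 x rfl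
      grind
    · rintro rfl
      refine ⟨⟨?_, ?_, ?_, ?_⟩, ?_⟩ <;> simp
  | succ s ih =>
    intro B hB
    have hne : B.Nonempty := Finset.card_pos.1 (by omega)
    set l := B.min' hne with hl
    set m := B.max' hne with hm
    have hlB : l ∈ B := B.min'_mem hne
    have hmB : m ∈ B := B.max'_mem hne
    have hlm : l < m := Finset.min'_lt_max'_of_card B (by omega)
    have hl' : ∀ y ∈ B, l ≤ y := fun y hy => B.min'_le y hy
    have hm' : ∀ y ∈ B, y ≤ m := fun y hy => B.le_max' y hy
    have e1 := addBot_ncard B l hlB (Or.inl hl')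
    have e2 := addBot_ncard B m hmB (Or.inr hm')
    rw [ih _ (by rw [Finset.card_erase_of_mem hlB]; omega)] at e1
    rw [ih _ (by rw [Finset.card_erase_of_mem hmB]; omega)] at e2
    have : DomC (fun _ => True) B =
      {r | r ∈ DomC (fun _ => True) B ∧ ∀ y ∈ B, y ≠ l → r y l} ∪
      {r | r ∈ DomC (fun _ => True) B ∧ ∀ y ∈ B, y ≠ m → r y m} := by
      ext r
      simp only [Set.mem_union, Set.mem_ofPred_eq]
      constructor
      · intro h
        obtain ⟨⟨h1, h2, h3, h4⟩, h5⟩ := id h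
        simp only [Finset.mem_coe] at *
        rcases h4 l hlB m hmB hlm.ne with h6 | h6
        · right
          refine ⟨h, fun y hy hym => ?_⟩
          by_cases hyl : y = l
          · rw [hyl]; exact h6
          have a1 := hl' y hy
          have a2 := hm' y hy
          have := h5 l y m hlB hy hmB (by omega) (by omega)
          have := h4 y hy m hmB hym
          have := h3 l hlB m hmB y hy h6
          tauto
        · left
          refine ⟨h, fun y hy hym => ?_⟩
          by_cases hyl : y = m
          · rw [hyl]; exact h6
          have a1 := hl' y hy
          have a2 := hm' y hy
          have := h5 l y m hlB hy hmB (by omega) (by omega)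
          have := h4 y hy l hlB hym
          have := h3 m hmB l hlB y hy h6
          tauto
      · tauto
    rw [this, Set.ncard_union_eq ?_ ((domC_finite _ B).subset (fun r h => h.1))
      ((domC_finite _ B).subset (fun r h => h.1)), e1, e2]
    · ring
    · rw [Set.disjoint_left]
      rintro r ⟨hr, hr1⟩ ⟨-, hr2⟩
      have x1 := hr1 m hmB hlm.ne'
      have x2 := hr2 l hlB hlm.ne
      exact hr.1.2.1 l hlB (hr.1.2.2.1 l hlB m hmB l hlB x2 x1)

theorem single_dipped_ncard (s : ℕ) (B : Finset ℕ) (hB : B.card = s + 1) :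
    (DomC (fun _ => False) B).ncard = 2 ^ s := by
  rw [← single_peaked_ncard s B hB, ← domC_flip_ncard (fun _ => True) B]
  simp

/-- insert `x` just below the up-set `up` -/
def insRel (B : Finset ℕ) (x : ℕ) (up : ℕ → Prop) (r : ℕ → ℕ → Prop) : ℕ → ℕ → Prop :=
  fun a b => r a b ∨ (a ∈ B ∧ up a ∧ b = x) ∨ (a = x ∧ b ∈ B ∧ ¬ up b)

theorem insRel_lin {B : Finset ℕ} {x : ℕ} {up : ℕ → Prop} {r : ℕ → ℕ → Prop} (hx : x ∉ B)
    (hr : IsLinearOrderOn (B : Set ℕ) r) (hup : ∀ a b, r a b → up b → up a) :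
    IsLinearOrderOn ((insert x B : Finset ℕ) : Set ℕ) (insRel B x up r) := by
  obtain ⟨h1, h2, h3, h4⟩ := hr
  simp only [Finset.mem_coe] at *
  refine ⟨?_, ?_, ?_, ?_⟩
  · intro a b h
    simp only [insRel, Finset.coe_insert, Set.mem_insert_iff, Finset.mem_coe] at *
    have := h1 a b
    tauto
  · intro a ha h
    simp only [insRel, Finset.coe_insert, Set.mem_insert_iff, Finset.mem_coe] at *
    grind
  · intro a ha b hb c hc h h'
    simp only [insRel, Finset.coe_insert, Set.mem_insert_iff, Finset.mem_coe] at *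
    have := h1 a b
    have := h1 b c
    have := h3 a
    have := hup a b
    have := hup b c
    have := h4 a
    have := h1 c a
    have := hup c a
    grind
  · intro a ha b hb h
    simp only [insRel, Finset.coe_insert, Set.mem_insert_iff, Finset.mem_coe] at *
    have := h4 a
    grind

theorem restrict_insRel {B : Finset ℕ} {x : ℕ} {up : ℕ → Prop} {r : ℕ → ℕ → Prop} (hx : x ∉ B)
    (hr : IsLinearOrderOn (B : Set ℕ) r) : restrictRel B (insRel B x up r) = r := by
  funext a b
  have := hr.1 a b
  simp only [restrictRel, insRel, Finset.mem_coe, eq_iff_iff] at *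
  grind

theorem insert_one_pos {col : ℕ → Prop} {B : Finset ℕ} {x : ℕ} (hx : x ∉ B) (hc : col x)
    {r : ℕ → ℕ → Prop} (hr : r ∈ DomC col B) :
    ∃ r' ∈ DomC col (insert x B), restrictRel B r' = r := by
  obtain ⟨hlin, h5⟩ := hr
  obtain ⟨h1, h2, h3, h4⟩ := id hlin
  simp only [Finset.mem_coe] at h1 h2 h3 h4
  obtain ⟨Hi, hHi⟩ : ∃ Hi : ℕ → Prop, ∀ h, Hi h ↔ (h ∈ B ∧ col h ∧
    ((h < x ∧ ∃ a ∈ B, a < h ∧ r a h) ∨ (x < h ∧ ∃ c ∈ B, h < c ∧ r c h))) := ⟨_, fun _ => Iff.rfl⟩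
  obtain ⟨up, hup⟩ : ∃ up : ℕ → Prop, ∀ a, up a ↔ ∃ h, Hi h ∧ (a = h ∨ r a h) :=
    ⟨_, fun _ => Iff.rfl⟩
  have hHup : ∀ h, Hi h → up h := fun h hh => (hup h).2 ⟨h, hh, Or.inl rfl⟩
  have hupc : ∀ a b, r a b → up b → up a := by
    intro a b hab hb
    obtain ⟨h, hh, hbh⟩ := (hup b).1 hb
    refine (hup a).2 ⟨h, hh, Or.inr ?_⟩
    rcases hbh with rfl | hbh
    · exact hab
    · exact h3 a (h1 _ _ hab).1 b (h1 _ _ hab).2 h (h1 _ _ hbh).2 hab hbh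
  -- no element of Hi is weakly below both a left and a right element
  have key : ∀ g, Hi g → ∀ a ∈ B, ∀ c ∈ B, a < x → x < c → (a = g ∨ r a g) → (c = g ∨ r c g) →
      False := by
    intro g hg a ha c hc' hax hxc hag hcg
    obtain ⟨hgB, hgc, hg⟩ := (hHi g).1 hg
    rcases hg with ⟨hgx, a0, ha0, ha0g, hr0⟩ | ⟨hgx, a0, ha0, ha0g, hr0⟩
    · have : r c g := by
        rcases hcg with rfl | h
        · omega
        · exact h
      exact (h5 a0 g c ha0 hgB hc' ha0g (by omega)).2 hgc ⟨hr0, this⟩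
    · have : r a g := by
        rcases hag with rfl | h
        · omega
        · exact h
      exact (h5 a g a0 ha hgB ha0 (by omega) ha0g).2 hgc ⟨this, hr0⟩
  have keyx : ∀ a ∈ B, ∀ c ∈ B, a < x → x < c → up a → up c → False := by
    intro a ha c hc' hax hxc hua huc
    obtain ⟨h, hh, hah⟩ := (hup a).1 hua
    obtain ⟨h', hh', hch⟩ := (hup c).1 huc
    have hB := ((hHi h).1 hh).1
    have hB' := ((hHi h').1 hh').1
    by_cases e : h = h'
    · subst e
      exact key h hh a ha c hc' hax hxc hah hch
    rcases h4 h hB h' hB' e with w | w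
    · refine key h' hh' a ha c hc' hax hxc (Or.inr ?_) hch
      rcases hah with rfl | q
      · exact w
      · exact h3 a ha h hB h' hB' q w
    · refine key h hh a ha c hc' hax hxc hah (Or.inr ?_)
      rcases hch with rfl | q
      · exact w
      · exact h3 c hc' h' hB' h hB q w
  -- odd elements in `up`
  have keyo1 : ∀ a ∈ B, ∀ b ∈ B, a < b → b < x → ¬ col b → r b a → up b → False := by
    intro a ha b hb hab hbx hcb hba hub
    obtain ⟨h, hh, hbh⟩ := (hup b).1 hub
    obtain ⟨hB, hcol, hq⟩ := (hHi h).1 hh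
    have hne : b ≠ h := by rintro rfl; exact hcb hcol
    have hbh : r b h := hbh.resolve_left hne
    rcases lt_or_gt_of_ne hne with w | w
    · exact (h5 a b h ha hb hB hab w).1 hcb ⟨hba, hbh⟩
    · rcases hq with ⟨hgx, a0, ha0, ha0g, hr0⟩ | ⟨hgx, a0, ha0, ha0g, hr0⟩
      · exact (h5 a0 h b ha0 hB hb ha0g w).2 hcol ⟨hr0, hbh⟩
      · omega
  have keyo2 : ∀ c ∈ B, ∀ b ∈ B, x < b → b < c → ¬ col b → r b c → up b → False := by
    intro a ha b hb hab hbx hcb hba hub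
    obtain ⟨h, hh, hbh⟩ := (hup b).1 hub
    obtain ⟨hB, hcol, hq⟩ := (hHi h).1 hh
    have hne : b ≠ h := by rintro rfl; exact hcb hcol
    have hbh : r b h := hbh.resolve_left hne
    rcases lt_or_gt_of_ne hne with w | w
    · rcases hq with ⟨hgx, a0, ha0, ha0g, hr0⟩ | ⟨hgx, a0, ha0, ha0g, hr0⟩
      · omega
      · exact (h5 b h a0 hb hB ha0 w ha0g).2 hcol ⟨hbh, hr0⟩
    · exact (h5 h b a hB hb ha w hbx).1 hcb ⟨hbh, hba⟩
  have hxr1 : ∀ a, ¬ r a x := fun a h => hx (h1 _ _ h).2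
  have hxr2 : ∀ a, ¬ r x a := fun a h => hx (h1 _ _ h).1
  refine ⟨insRel B x up r, ⟨insRel_lin hx hlin hupc, ?_⟩, restrict_insRel hx hlin⟩
  intro a b c ha hb hc' hab hbc
  rw [Finset.mem_insert] at ha hb hc'
  by_cases hbx : b = x
  · subst hbx
    have ha : a ∈ B := ha.resolve_left (by omega)
    have hc' : c ∈ B := hc'.resolve_left (by omega)
    refine ⟨fun h => absurd hc h, fun _ => ?_⟩
    rintro ⟨p, q⟩
    have := keyx a ha c hc' hab hbc
    simp only [insRel] at p q
    grind
  replace hb : b ∈ B := hb.resolve_left hbx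
  by_cases hax : a = x
  · subst hax
    have hc' : c ∈ B := hc'.resolve_left (by omega)
    have k2 := keyo2 c hc' b hb hab hbc
    have k3 : col b → r c b → up b := fun q1 q2 =>
      hHup b ((hHi b).2 ⟨hb, q1, Or.inr ⟨hab, c, hc', hbc, q2⟩⟩)
    simp only [insRel]
    grind
  replace ha : a ∈ B := ha.resolve_left hax
  by_cases hcx : c = x
  · subst hcx
    have k2 := keyo1 a ha b hb hab hbc
    have k3 : col b → r a b → up b := fun q1 q2 =>
      hHup b ((hHi b).2 ⟨hb, q1, Or.inl ⟨hbc, a, ha, hab, q2⟩⟩)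
    simp only [insRel]
    grind
  replace hc' : c ∈ B := hc'.resolve_left hcx
  have := h5 a b c ha hb hc' hab hbc
  simp only [insRel]
  tauto

theorem insert_one {col : ℕ → Prop} {B : Finset ℕ} {x : ℕ} (hx : x ∉ B)
    {r : ℕ → ℕ → Prop} (hr : r ∈ DomC col B) :
    ∃ r' ∈ DomC col (insert x B), restrictRel B r' = r := by
  by_cases hc : col x
  · exact insert_one_pos hx hc hr
  · obtain ⟨r', h1, h2⟩ := insert_one_pos (col := fun x => ¬ col x) hx hc (domC_flip hr)
    refine ⟨flip r', by simpa using domC_flip h1, ?_⟩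
    funext a b
    have := congrFun (congrFun h2 b) a
    simp only [restrictRel, flip, eq_iff_iff] at *
    tauto

theorem extend_all {col : ℕ → Prop} {B : Finset ℕ} {r : ℕ → ℕ → Prop} (hr : r ∈ DomC col B)
    (S : Finset ℕ) : ∃ r' ∈ DomC col (S ∪ B), restrictRel B r' = r := by
  induction S using Finset.induction_on with
  | empty =>
    refine ⟨r, by simpa using hr, ?_⟩
    funext a b
    have := hr.1.1 a b
    simp only [restrictRel, eq_iff_iff]
    tauto
  | insert x S hxS ih =>
    obtain ⟨s, hs, hsr⟩ := ih
    by_cases hx : x ∈ S ∪ B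
    · refine ⟨s, ?_, hsr⟩
      rw [Finset.insert_union, Finset.insert_eq_of_mem hx]
      exact hs
    · obtain ⟨t, ht, hts⟩ := insert_one hx hs
      refine ⟨t, by rw [Finset.insert_union]; exact ht, ?_⟩
      rw [← hsr, ← hts]
      funext a b
      simp only [restrictRel, eq_iff_iff, Finset.coe_union, Set.mem_union]
      tauto

theorem restrict_mem {col : ℕ → Prop} {B C : Finset ℕ} (hBC : B ⊆ C) {r : ℕ → ℕ → Prop}
    (hr : r ∈ DomC col C) : restrictRel B r ∈ DomC col B := by
  obtain ⟨⟨h1, h2, h3, h4⟩, h5⟩ := hr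
  refine ⟨⟨?_, ?_, ?_, ?_⟩, ?_⟩
  · intro a b h
    exact ⟨h.1, h.2.1⟩
  · intro a ha h
    exact h2 a (hBC ha) h.2.2
  · intro a ha b hb c hc h h'
    exact ⟨ha, hc, h3 a (hBC ha) b (hBC hb) c (hBC hc) h.2.2 h'.2.2⟩
  · intro a ha b hb h
    exact (h4 a (hBC ha) b (hBC hb) h).imp (fun h => ⟨ha, hb, h⟩) (fun h => ⟨hb, ha, h⟩)
  · intro a b c ha hb hc hab hbc
    have := h5 a b c (hBC ha) (hBC hb) (hBC hc) hab hbc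
    simp only [restrictRel]
    tauto

theorem restrictDom_eq {col : ℕ → Prop} {B C : Finset ℕ} (hBC : B ⊆ C) :
    restrictDom B (DomC col C) = DomC col B := by
  ext r
  constructor
  · rintro ⟨s, hs, rfl⟩
    exact restrict_mem hBC hs
  · intro hr
    obtain ⟨s, hs, h⟩ := extend_all hr C
    rw [Finset.union_eq_left.2 hBC] at hs
    exact ⟨s, hs, h⟩

set_option maxHeartbeats 1000000 in
theorem merge_exists {col : ℕ → Prop} {A E O : Finset ℕ} {l m : ℕ} (hlA : l ∈ A) (hmA : m ∈ A)
    (hlm : l < m) (hl : ∀ y ∈ A, l ≤ y) (hm : ∀ y ∈ A, y ≤ m)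
    (hE : ∀ x, x ∈ E ↔ x ∈ A ∧ x ≠ l ∧ x ≠ m ∧ col x)
    (hO : ∀ x, x ∈ O ↔ x ∈ A ∧ x ≠ l ∧ x ≠ m ∧ ¬ col x)
    {P Q : ℕ → ℕ → Prop} (hP : P ∈ DomC (fun _ => True) (insert l E))
    (hQ : Q ∈ DomC (fun _ => False) (insert m O)) :
    ∃ r, (r ∈ DomC col A ∧ r l m) ∧ restrictRel (insert l E : Finset ℕ) r = P ∧
      restrictRel (insert m O : Finset ℕ) r = Q := by
  classical
  obtain ⟨⟨p1, p2, p3, p4⟩, p5⟩ := hP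
  obtain ⟨⟨q1, q2, q3, q4⟩, q5⟩ := hQ
  simp only [Finset.mem_coe] at p1 p2 p3 p4 q1 q2 q3 q4
  have hlE : l ∈ insert l E := Finset.mem_insert_self _ _
  have hmO : m ∈ insert m O := Finset.mem_insert_self _ _
  have iE : ∀ x, x ∈ E → x ∈ insert l E := fun x hx => Finset.mem_insert_of_mem hx
  have iO : ∀ x, x ∈ O → x ∈ insert m O := fun x hx => Finset.mem_insert_of_mem hx
  -- block facts
  have fP1 : ∀ x ∈ E, ∀ y ∈ E, P l x → x < y → P x y := by
    intro x hx y hy hlx hxy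
    have hlx' : l < x := lt_of_le_of_ne (hl x ((hE x).1 hx).1) (Ne.symm ((hE x).1 hx).2.1)
    have := (p5 l x y hlE (iE x hx) (iE y hy) hlx' hxy).2 trivial
    have := p4 x (iE x hx) y (iE y hy) hxy.ne
    tauto
  have fP2 : ∀ x ∈ E, ∀ u ∈ E, P l x → P u l → u < x := by
    intro x hx u hu hlx hul
    have hux : P u x := p3 u (iE u hu) l hlE x (iE x hx) hul hlx
    by_contra hcon
    have hne : x ≠ u := by rintro rfl; exact p2 x (iE x hx) hux
    have := fP1 x hx u hu hlx (by omega)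
    exact p2 x (iE x hx) (p3 x (iE x hx) u (iE u hu) x (iE x hx) this hux)
  have fQ1 : ∀ x ∈ O, ∀ y ∈ O, Q y m → x < y → Q x y := by
    intro x hx y hy hym hxy
    have hym' : y < m := lt_of_le_of_ne (hm y ((hO y).1 hy).1) ((hO y).1 hy).2.2.1
    have := (q5 x y m (iO x hx) (iO y hy) hmO hxy hym').1 (fun h => h)
    have := q4 x (iO x hx) y (iO y hy) hxy.ne
    tauto
  have fQ2 : ∀ x ∈ O, ∀ v ∈ O, Q x m → Q m v → x < v := by
    intro x hx v hv hxm hmv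
    have hxv : Q x v := q3 x (iO x hx) m hmO v (iO v hv) hxm hmv
    by_contra hcon
    have hne : x ≠ v := by rintro rfl; exact q2 x (iO x hx) hxv
    have := fQ1 v hv x hx hxm (by omega)
    exact q2 x (iO x hx) (q3 x (iO x hx) v (iO v hv) x (iO x hx) hxv this)
  have tP : ∀ x ∈ E, ¬ P x l → P l x := fun x hx h =>
    (p4 x (iE x hx) l hlE ((hE x).1 hx).2.1).resolve_left h
  have tQ : ∀ x ∈ O, ¬ Q m x → Q x m := fun x hx h =>
    (q4 x (iO x hx) m hmO ((hO x).1 hx).2.2.1).resolve_right h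
  have nP : ∀ x ∈ E, P x l → ¬ P l x := fun x hx h h' =>
    p2 x (iE x hx) (p3 x (iE x hx) l hlE x (iE x hx) h h')
  have nQ : ∀ x ∈ O, Q x m → ¬ Q m x := fun x hx h h' =>
    q2 x (iO x hx) (q3 x (iO x hx) m hmO x (iO x hx) h h')
  obtain ⟨β, hβ⟩ : ∃ β : ℕ → ℕ, ∀ x, β x = if x = l then 1 else if x = m then 3 else
    if col x then (if P x l then 0 else 2) else (if Q m x then 4 else 2) := ⟨_, fun _ => rfl⟩
  have bl : β l = 1 := by rw [hβ]; simp
  have bm : β m = 3 := by rw [hβ]; simp [hlm.ne']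
  have cE : ∀ x ∈ E, (P x l ∧ β x = 0) ∨ (P l x ∧ β x = 2) := by
    intro x hx
    have h := (hE x).1 hx
    have := tP x hx
    rw [hβ x, if_neg h.2.1, if_neg h.2.2.1, if_pos h.2.2.2]
    by_cases hq : P x l
    · left; exact ⟨hq, if_pos hq⟩
    · right; exact ⟨this hq, if_neg hq⟩
  have cO : ∀ x ∈ O, (Q m x ∧ β x = 4) ∨ (Q x m ∧ β x = 2) := by
    intro x hx
    have h := (hO x).1 hx
    have := tQ x hx
    rw [hβ x, if_neg h.2.1, if_neg h.2.2.1, if_neg h.2.2.2]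
    by_cases hq : Q m x
    · left; exact ⟨hq, if_pos hq⟩
    · right; exact ⟨this hq, if_neg hq⟩
  -- classification
  have cls : ∀ x ∈ A, (x = l ∧ β x = 1) ∨ (x = m ∧ β x = 3) ∨ (x ∈ E ∧ P x l ∧ β x = 0) ∨
      (x ∈ E ∧ P l x ∧ β x = 2) ∨ (x ∈ O ∧ Q m x ∧ β x = 4) ∨ (x ∈ O ∧ Q x m ∧ β x = 2) := by
    intro x hx
    by_cases e1 : x = l
    · subst e1; exact Or.inl ⟨rfl, bl⟩
    by_cases e2 : x = m
    · subst e2; exact Or.inr (Or.inl ⟨rfl, bm⟩)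
    by_cases e3 : col x
    · have h := (hE x).2 ⟨hx, e1, e2, e3⟩
      have := cE x h
      tauto
    · have h := (hO x).2 ⟨hx, e1, e2, e3⟩
      have := cO x h
      tauto
  obtain ⟨T, hT⟩ : ∃ T : ℕ → ℕ → Prop, ∀ x y, T x y ↔ ((β x = 0 ∧ P x y) ∨ (β x = 2 ∧ x < y) ∨
    (β x = 4 ∧ Q x y)) := ⟨_, fun _ _ => Iff.rfl⟩
  obtain ⟨r, hr⟩ : ∃ r : ℕ → ℕ → Prop, ∀ x y, r x y ↔ (x ∈ A ∧ y ∈ A ∧ (β x < β y ∨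
    (β x = β y ∧ T x y))) := ⟨_, fun _ _ => Iff.rfl⟩
  have c0 : ∀ x ∈ A, β x = 0 → x ∈ E ∧ P x l := by
    intro x hx h
    rcases cls x hx with ⟨k, k'⟩ | ⟨k, k'⟩ | ⟨k, k1, k'⟩ | ⟨k, k1, k'⟩ | ⟨k, k1, k'⟩ | ⟨k, k1, k'⟩ <;>
      first | omega | exact ⟨k, k1⟩
  have c4 : ∀ x ∈ A, β x = 4 → x ∈ O ∧ Q m x := by
    intro x hx h
    rcases cls x hx with ⟨k, k'⟩ | ⟨k, k'⟩ | ⟨k, k1, k'⟩ | ⟨k, k1, k'⟩ | ⟨k, k1, k'⟩ | ⟨k, k1, k'⟩ <;>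
      first | omega | exact ⟨k, k1⟩
  have c1 : ∀ x ∈ A, β x = 1 → x = l := by
    intro x hx h
    rcases cls x hx with ⟨k, k'⟩ | ⟨k, k'⟩ | ⟨k, k1, k'⟩ | ⟨k, k1, k'⟩ | ⟨k, k1, k'⟩ | ⟨k, k1, k'⟩ <;>
      first | omega | exact ⟨k, k1⟩
  have c3 : ∀ x ∈ A, β x = 3 → x = m := by
    intro x hx h
    rcases cls x hx with ⟨k, k'⟩ | ⟨k, k'⟩ | ⟨k, k1, k'⟩ | ⟨k, k1, k'⟩ | ⟨k, k1, k'⟩ | ⟨k, k1, k'⟩ <;>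
      first | omega | exact ⟨k, k1⟩
  have c5 : ∀ x ∈ A, β x ≤ 4 := by
    intro x hx
    rcases cls x hx with ⟨k, k'⟩ | ⟨k, k'⟩ | ⟨k, k1, k'⟩ | ⟨k, k1, k'⟩ | ⟨k, k1, k'⟩ | ⟨k, k1, k'⟩ <;>
      first | omega | exact ⟨k, k1⟩
  have irr : ∀ x, ¬ r x x := by
    intro x h
    obtain ⟨hx, -, h⟩ := (hr x x).1 h
    have h := (hT x x).1 (h.resolve_left (lt_irrefl _)).2
    rcases h with ⟨h0, h⟩ | ⟨h0, h⟩ | ⟨h0, h⟩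
    · exact p2 x (iE x (c0 x hx h0).1) h
    · exact lt_irrefl _ h
    · exact q2 x (iO x (c4 x hx h0).1) h
  have trn : ∀ x y z, r x y → r y z → r x z := by
    intro x y z hxy hyz
    obtain ⟨hx, hy, h⟩ := (hr x y).1 hxy
    obtain ⟨-, hz, h'⟩ := (hr y z).1 hyz
    refine (hr x z).2 ⟨hx, hz, ?_⟩
    rcases h with h | ⟨h, t⟩
    · left
      rcases h' with h' | ⟨h', t'⟩ <;> omega
    · rcases h' with h' | ⟨h', t'⟩
      · left; omega
      · right
        refine ⟨h.trans h', ?_⟩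
        rw [hT] at t t' ⊢
        rcases t with ⟨h0, t⟩ | ⟨h0, t⟩ | ⟨h0, t⟩
        · left
          refine ⟨h0, ?_⟩
          have t' : P y z := by
            rcases t' with ⟨_, t'⟩ | ⟨_, t'⟩ | ⟨_, t'⟩
            · exact t'
            · omega
            · omega
          exact p3 x (iE x (c0 x hx h0).1) y (iE y (c0 y hy (by omega)).1) z
            (iE z (c0 z hz (by omega)).1) t t'
        · right; left
          omega
        · right; right
          refine ⟨h0, ?_⟩
          have t' : Q y z := by
            rcases t' with ⟨_, t'⟩ | ⟨_, t'⟩ | ⟨_, t'⟩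
            · omega
            · omega
            · exact t'
          exact q3 x (iO x (c4 x hx h0).1) y (iO y (c4 y hy (by omega)).1) z
            (iO z (c4 z hz (by omega)).1) t t'
  have tot : ∀ x ∈ A, ∀ y ∈ A, x ≠ y → r x y ∨ r y x := by
    intro x hx y hy hne
    rw [hr, hr]
    rcases lt_trichotomy (β x) (β y) with h | h | h
    · left; exact ⟨hx, hy, Or.inl h⟩
    · have b5 := c5 x hx
      rw [hT, hT]
      have hcase : β x = 0 ∨ β x = 1 ∨ β x = 2 ∨ β x = 3 ∨ β x = 4 := by omega
      rcases hcase with h0 | h0 | h0 | h0 | h0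
      · have := p4 x (iE x (c0 x hx h0).1) y (iE y (c0 y hy (by omega)).1) hne
        have : β y = 0 := by omega
        tauto
      · exact absurd ((c1 x hx h0).trans (c1 y hy (by omega)).symm) hne
      · have : β y = 2 := by omega
        have := lt_or_gt_of_ne hne
        tauto
      · exact absurd ((c3 x hx h0).trans (c3 y hy (by omega)).symm) hne
      · have := q4 x (iO x (c4 x hx h0).1) y (iO y (c4 y hy (by omega)).1) hne
        have : β y = 4 := by omega
        tauto
    · right; exact ⟨hy, hx, Or.inl h⟩
  have asy : ∀ x y, r x y → ¬ r y x := fun x y h h' => irr x (trn x y x h h')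
  -- forward restriction
  have rP : ∀ x ∈ insert l E, ∀ y ∈ insert l E, P x y → r x y := by
    intro x hx y hy hxy
    have hne : x ≠ y := by rintro rfl; exact p2 x hx hxy
    rw [Finset.mem_insert] at hx hy
    rw [hr]
    rcases hx with rfl | hx
    · have hy := hy.resolve_left hne.symm
      refine ⟨hlA, ((hE y).1 hy).1, Or.inl ?_⟩
      rcases cE y hy with ⟨h, _⟩ | ⟨h, h'⟩
      · exact absurd hxy (nP y hy h)
      · omega
    · rcases hy with rfl | hy
      · refine ⟨((hE x).1 hx).1, hlA, Or.inl ?_⟩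
        rcases cE x hx with ⟨h, h'⟩ | ⟨h, h'⟩
        · omega
        · exact absurd h (nP x hx hxy)
      · refine ⟨((hE x).1 hx).1, ((hE y).1 hy).1, ?_⟩
        rw [hT]
        rcases cE x hx with ⟨h, h'⟩ | ⟨h, h'⟩
        · rcases cE y hy with ⟨k, k'⟩ | ⟨k, k'⟩
          · right; exact ⟨by omega, Or.inl ⟨h', hxy⟩⟩
          · left; omega
        · rcases cE y hy with ⟨k, k'⟩ | ⟨k, k'⟩
          · exact absurd (p3 l hlE x (iE x hx) y (iE y hy) h hxy) (nP y hy k)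
          · right
            refine ⟨by omega, Or.inr (Or.inl ⟨h', ?_⟩)⟩
            by_contra hcon
            have := fP1 y hy x hx k (by omega)
            exact p2 x (iE x hx) (p3 x (iE x hx) y (iE y hy) x (iE x hx) hxy this)
  have rQ : ∀ x ∈ insert m O, ∀ y ∈ insert m O, Q x y → r x y := by
    intro x hx y hy hxy
    have hne : x ≠ y := by rintro rfl; exact q2 x hx hxy
    rw [Finset.mem_insert] at hx hy
    rw [hr]
    rcases hx with rfl | hx
    · have hy := hy.resolve_left hne.symm
      refine ⟨hmA, ((hO y).1 hy).1, Or.inl ?_⟩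
      rcases cO y hy with ⟨h, h'⟩ | ⟨h, h'⟩
      · omega
      · exact absurd hxy (nQ y hy h)
    · rcases hy with rfl | hy
      · refine ⟨((hO x).1 hx).1, hmA, Or.inl ?_⟩
        rcases cO x hx with ⟨h, h'⟩ | ⟨h, h'⟩
        · exact absurd h (nQ x hx hxy)
        · omega
      · refine ⟨((hO x).1 hx).1, ((hO y).1 hy).1, ?_⟩
        rw [hT]
        rcases cO x hx with ⟨h, h'⟩ | ⟨h, h'⟩
        · rcases cO y hy with ⟨k, k'⟩ | ⟨k, k'⟩
          · right; exact ⟨by omega, Or.inr (Or.inr ⟨h', hxy⟩)⟩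
          · exact absurd h (nQ x hx (q3 x (iO x hx) y (iO y hy) m hmO hxy k))
        · rcases cO y hy with ⟨k, k'⟩ | ⟨k, k'⟩
          · left; omega
          · right
            refine ⟨by omega, Or.inr (Or.inl ⟨h', ?_⟩)⟩
            by_contra hcon
            have := fQ1 y hy x hx h (by omega)
            exact q2 x (iO x hx) (q3 x (iO x hx) y (iO y hy) x (iO x hx) hxy this)
  refine ⟨r, ⟨⟨⟨?_, fun a _ => irr a, fun a _ b _ c _ => trn a b c, tot⟩, ?_⟩, ?_⟩, ?_, ?_⟩
  · intro a b h
    exact ⟨((hr a b).1 h).1, ((hr a b).1 h).2.1⟩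
  · intro a b c ha hb hc hab hbc
    have hla := hl a ha
    have hcm := hm c hc
    constructor
    · rintro hcb ⟨h1, h2⟩
      have hbO : b ∈ O := (hO b).2 ⟨hb, by omega, by omega, hcb⟩
      have h1 := ((hr b a).1 h1).2.2
      have h2 := ((hr b c).1 h2).2.2
      rw [hT] at h1 h2
      rcases cO b hbO with ⟨h, h'⟩ | ⟨h, h'⟩
      · have a5 := c5 a ha
        have c5' := c5 c hc
        have aO := (c4 a ha (by omega)).1
        have cO' := (c4 c hc (by omega)).1
        refine (q5 a b c (iO a aO) (iO b hbO) (iO c cO') hab hbc).1 (fun h => h) ⟨?_, ?_⟩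
        · rcases h1 with h1 | ⟨_, h1 | h1 | h1⟩
          · omega
          · omega
          · omega
          · exact h1.2
        · rcases h2 with h1 | ⟨_, h1 | h1 | h1⟩
          · omega
          · omega
          · omega
          · exact h1.2
      · have : β a > 2 := by
          rcases h1 with h1 | ⟨_, h1 | h1 | h1⟩ <;> omega
        have a5 := c5 a ha
        have : β a ≠ 3 := fun h => by
          have := c3 a ha h
          omega
        obtain ⟨aO, hma⟩ := c4 a ha (by omega)
        have := fQ2 b hbO a aO h hma
        omega
    · rintro hcb ⟨h1, h2⟩
      have hbE : b ∈ E := (hE b).2 ⟨hb, by omega, by omega, hcb⟩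
      have h1 := ((hr a b).1 h1).2.2
      have h2 := ((hr c b).1 h2).2.2
      rw [hT] at h1 h2
      rcases cE b hbE with ⟨h, h'⟩ | ⟨h, h'⟩
      · have aE := (c0 a ha (by omega)).1
        have cE' := (c0 c hc (by omega)).1
        refine (p5 a b c (iE a aE) (iE b hbE) (iE c cE') hab hbc).2 trivial ⟨?_, ?_⟩
        · rcases h1 with h1 | ⟨_, h1 | h1 | h1⟩
          · omega
          · exact h1.2
          · omega
          · omega
        · rcases h2 with h1 | ⟨_, h1 | h1 | h1⟩
          · omega
          · exact h1.2
          · omega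
          · omega
      · have : β c < 2 := by
          rcases h2 with h1 | ⟨_, h1 | h1 | h1⟩ <;> omega
        have : β c ≠ 1 := fun h => by
          have := c1 c hc h
          omega
        obtain ⟨cE', hcl⟩ := c0 c hc (by omega)
        have := fP2 b hbE c cE' h hcl
        omega
  · exact (hr l m).2 ⟨hlA, hmA, Or.inl (by omega)⟩
  · funext x y
    simp only [restrictRel, eq_iff_iff, Finset.mem_coe]
    constructor
    · rintro ⟨hx, hy, h⟩
      have hne : x ≠ y := by rintro rfl; exact irr x h
      exact (p4 x hx y hy hne).resolve_right (fun h' => asy x y h (rP y hy x hx h'))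
    · intro h
      obtain ⟨hx, hy⟩ := p1 x y h
      exact ⟨hx, hy, rP x hx y hy h⟩
  · funext x y
    simp only [restrictRel, eq_iff_iff, Finset.mem_coe]
    constructor
    · rintro ⟨hx, hy, h⟩
      have hne : x ≠ y := by rintro rfl; exact irr x h
      exact (q4 x hx y hy hne).resolve_right (fun h' => asy x y h (rQ y hy x hx h'))
    · intro h
      obtain ⟨hx, hy⟩ := q1 x y h
      exact ⟨hx, hy, rQ x hx y hy h⟩

theorem half_bound (col : ℕ → Prop) {A : Finset ℕ} {l m : ℕ} (hlA : l ∈ A) (hmA : m ∈ A)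
    (hlm : l < m) (hl : ∀ y ∈ A, l ≤ y) (hm : ∀ y ∈ A, y ≤ m) (s : ℕ) (hs : A.card = s + 2) :
    2 ^ s ≤ {r | r ∈ DomC col A ∧ r l m}.ncard := by
  classical
  set I := (A.erase l).erase m with hI
  have hIc : I.card = s := by
    rw [hI, Finset.card_erase_of_mem (Finset.mem_erase.2 ⟨hlm.ne', hmA⟩),
      Finset.card_erase_of_mem hlA]
    omega
  set E := I.filter col with hEd
  set O := I.filter (fun x => ¬ col x) with hOd
  have hcard : E.card + O.card = s := by
    rw [← hIc]; exact Finset.card_filter_add_card_filter_not _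
  have hE : ∀ x, x ∈ E ↔ x ∈ A ∧ x ≠ l ∧ x ≠ m ∧ col x := by
    intro x; simp [hEd, hI]; tauto
  have hO : ∀ x, x ∈ O ↔ x ∈ A ∧ x ≠ l ∧ x ≠ m ∧ ¬ col x := by
    intro x; simp [hOd, hI]; tauto
  have n1 := single_peaked_ncard E.card (insert l E)
    (Finset.card_insert_of_notMem (fun h => ((hE l).1 h).2.1 rfl))
  have n2 := single_dipped_ncard O.card (insert m O)
    (Finset.card_insert_of_notMem (fun h => ((hO m).1 h).2.2.1 rfl))
  have n3 : (DomC (fun _ => True) (insert l E) ×ˢ DomC (fun _ => False) (insert m O)).ncard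
      = 2 ^ s := by
    rw [Set.ncard_prod, n1, n2, ← pow_add, hcard]
  rw [← n3]
  have fin : {r | r ∈ DomC col A ∧ r l m}.Finite := (domC_finite col A).subset (fun r h => h.1)
  refine le_trans (Set.ncard_le_ncard ?_ (fin.image (fun r =>
    (restrictRel ((insert l E : Finset ℕ) : Set ℕ) r,
      restrictRel ((insert m O : Finset ℕ) : Set ℕ) r)))) (Set.ncard_image_le fin)
  rintro ⟨P, Q⟩ ⟨hP, hQ⟩
  obtain ⟨r, h1, h2, h3⟩ := merge_exists hlA hmA hlm hl hm hE hO hP hQ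
  exact ⟨r, h1, by simp only [h2, h3]⟩

theorem lower_bound (col : ℕ → Prop) (A : Finset ℕ) (s : ℕ) (hs : A.card = s + 1) :
    2 ^ s ≤ (DomC col A).ncard := by
  rcases s with _ | s
  · rw [domC_congr (col' := fun _ => True), single_peaked_ncard 0 A hs]
    intro a ha b hb c hc hab hbc
    have := Finset.card_le_one.1 (show A.card ≤ 1 by omega) a ha b hb
    omega
  have hne : A.Nonempty := Finset.card_pos.1 (by omega)
  have hlB := A.min'_mem hne
  have hmB := A.max'_mem hne
  have hlm : A.min' hne < A.max' hne := Finset.min'_lt_max'_of_card A (by omega)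
  have hl' : ∀ y ∈ A, A.min' hne ≤ y := fun y hy => A.min'_le y hy
  have hm' : ∀ y ∈ A, y ≤ A.max' hne := fun y hy => A.le_max' y hy
  generalize A.min' hne = l at *
  generalize A.max' hne = m at *
  have h1 := half_bound col hlB hmB hlm hl' hm' s (by omega)
  have h2 := half_bound (fun x => ¬ col x) hlB hmB hlm hl' hm' s (by omega)
  rw [← Set.ncard_image_of_injective _ flip_inj] at h2
  have f1 : {r | r ∈ DomC col A ∧ r l m}.Finite := (domC_finite col A).subset (fun r h => h.1)
  have f2 : ((fun r : ℕ → ℕ → Prop => flip r) ''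
      {r | r ∈ DomC (fun x => ¬ col x) A ∧ r l m}).Finite :=
    ((domC_finite _ A).subset (fun r h => h.1)).image _
  have hd : Disjoint {r | r ∈ DomC col A ∧ r l m} ((fun r : ℕ → ℕ → Prop => flip r) ''
      {r | r ∈ DomC (fun x => ¬ col x) A ∧ r l m}) := by
    rw [Set.disjoint_left]
    rintro r ⟨hr, hr1⟩ ⟨t, ⟨ht, ht1⟩, rfl⟩
    exact hr.1.2.1 l hlB (hr.1.2.2.1 l hlB m hmB l hlB hr1 ht1)
  have hu := Set.ncard_union_eq hd f1 f2
  have hsub := Set.ncard_le_ncard (s := {r | r ∈ DomC col A ∧ r l m} ∪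
    ((fun r : ℕ → ℕ → Prop => flip r) '' {r | r ∈ DomC (fun x => ¬ col x) A ∧ r l m}))
    (t := DomC col A) (by
      rintro r (h | ⟨t, ⟨ht, -⟩, rfl⟩)
      · exact h.1
      · simpa using domC_flip ht) (domC_finite col A)
  rw [pow_succ]
  omega

theorem fishburn_eq (n : ℕ) : fishburnAlternating n = DomC Even (Finset.Icc 1 n) := by
  ext r
  simp only [fishburnAlternating, DomC, Finset.coe_Icc, Set.mem_ofPred_eq, Finset.mem_Icc,
    Set.mem_Icc, Nat.not_even_iff_odd]

theorem exists_wit (n : ℕ) (hn : 2 ≤ n) : ∃ W : Finset ℕ, W ⊆ Finset.Icc 1 n ∧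
    W.card = (n + 1) / 2 + 1 ∧ ((∀ a ∈ W, ∀ b ∈ W, ∀ c ∈ W, a < b → b < c → (Even b ↔ True)) ∨
      (∀ a ∈ W, ∀ b ∈ W, ∀ c ∈ W, a < b → b < c → (Even b ↔ False))) := by
  rcases Nat.even_or_odd' n with ⟨t, rfl | rfl⟩
  · refine ⟨insert (2 * t) ((Finset.range t).image (fun i => 2 * i + 1)), ?_, ?_, Or.inr ?_⟩
    · intro x hx
      simp only [Finset.mem_insert, Finset.mem_image, Finset.mem_range, Finset.mem_Icc] at *
      rcases hx with rfl | ⟨i, hi, rfl⟩ <;> omega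
    · rw [Finset.card_insert_of_notMem, Finset.card_image_of_injective, Finset.card_range]
      · omega
      · intro a b h
        simp only at h
        omega
      · simp only [Finset.mem_image, Finset.mem_range, not_exists, not_and]
        intro i hi
        omega
    · intro a ha b hb c hc hab hbc
      simp only [Finset.mem_insert, Finset.mem_image, Finset.mem_range] at *
      rw [Nat.even_iff, iff_false]
      rcases hb with rfl | ⟨i, hi, rfl⟩
      · rcases hc with rfl | ⟨j, hj, rfl⟩ <;> omega
      · omega
  · refine ⟨insert (2 * t + 1) (insert 1 ((Finset.range t).image (fun i => 2 * i + 2))),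
      ?_, ?_, Or.inl ?_⟩
    · intro x hx
      simp only [Finset.mem_insert, Finset.mem_image, Finset.mem_range, Finset.mem_Icc] at *
      rcases hx with rfl | rfl | ⟨i, hi, rfl⟩ <;> omega
    · rw [Finset.card_insert_of_notMem, Finset.card_insert_of_notMem,
        Finset.card_image_of_injective, Finset.card_range]
      · omega
      · intro a b h
        simp only at h
        omega
      · simp only [Finset.mem_image, Finset.mem_range, not_exists, not_and]
        intro i hi
        omega
      · simp only [Finset.mem_insert, Finset.mem_image, Finset.mem_range, not_or, not_exists,
          not_and]
        refine ⟨by omega, fun i hi => by omega⟩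
    · intro a ha b hb c hc hab hbc
      simp only [Finset.mem_insert, Finset.mem_image, Finset.mem_range] at *
      rw [Nat.even_iff]
      rcases hb with rfl | rfl | ⟨i, hi, rfl⟩
      · rcases hc with rfl | rfl | ⟨j, hj, rfl⟩ <;> omega
      · rcases ha with rfl | rfl | ⟨j, hj, rfl⟩ <;> omega
      · simp

/-- For every `n ≥ 2` and every `k` with `1 ≤ k ≤ min n (⌈n/2⌉ + 1)`, Fishburn's
alternating domain on `{1,…,n}` is exactly `(k, 2^(k-1))`-abundant. -/
theorem fishburn_exactly_abundant (n k : ℕ) (hn : 2 ≤ n)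
    (hk1 : 1 ≤ k) (hk : k ≤ min n ((n + 1) / 2 + 1)) :
    IsExactlyAbundant (Set.Icc 1 n) (fishburnAlternating n) k (2 ^ (k - 1)) := by
  obtain ⟨s, rfl⟩ : ∃ s, k = s + 1 := ⟨k - 1, by omega⟩
  rw [Nat.add_sub_cancel]
  have hsub : ∀ A : Finset ℕ, A ⊆ Finset.Icc 1 n →
      restrictDom (A : Set ℕ) (fishburnAlternating n) = DomC Even A := by
    intro A hA
    rw [fishburn_eq, restrictDom_eq hA]
  constructor
  · intro A hA hcard
    have hfin : A.Finite := (Set.finite_Icc 1 n).subset hA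
    lift A to Finset ℕ using hfin
    rw [Set.ncard_coe_finset] at hcard
    rw [hsub A (by rw [← Finset.coe_subset, Finset.coe_Icc]; exact hA)]
    exact lower_bound Even A s hcard
  · intro h
    obtain ⟨W, hW, hWc, hcol⟩ := exists_wit n hn
    obtain ⟨A, hAW, hAc⟩ := Finset.exists_subset_card_eq (s := W) (n := s + 1)
      (by rw [hWc]; exact hk.trans (min_le_right _ _))
    have hA := hAW.trans hW
    have h1 := h (A : Set ℕ) (by rw [← Finset.coe_Icc, Finset.coe_subset]; exact hA)
      (by rw [Set.ncard_coe_finset]; exact hAc)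
    rw [hsub A hA] at h1
    have h2 : (DomC Even A).ncard = 2 ^ s := by
      rcases hcol with hc | hc
      · rw [domC_congr (col' := fun _ => True) (fun a ha b hb c hc' =>
          hc a (hAW ha) b (hAW hb) c (hAW hc')), single_peaked_ncard s A hAc]
      · rw [domC_congr (col' := fun _ => False) (fun a ha b hb c hc' =>
          hc a (hAW ha) b (hAW hb) c (hAW hc')), single_dipped_ncard s A hAc]
    omega
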